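/- arXiv:2507.03862 — 2 statements merged into one kernel-verified Lean document; each statement's English description precedes it below -/
import Mathlib

section
/- For every Laurent polynomial f with complex coefficients (viewed as a function on ℂ∖{0}) and every z ∈ ℂ with z ≠ 0 and z^{2N} ≠ 1, one has (L(N)(L(N)f))(z) − N(α+β+1)·(L(N)f)(z) = z²·f″(z) + C(z)·f′(z) + z·Σ_{k=0}^{N−1} A_k′(z;N)·(f(q^k/z) − f(z)), where C(z) = z·(1 + N(α+β+1) + 2N(α+β+1+(α−β)z^N)/(z^{2N}−1)) and A_k′(z;N) denotes the derivative of A_k(·;N) at z. -/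
open Finset

/-- Monic OPUC associated to a sequence of (real) Verblunsky parameters. -/
noncomputable def Phi (c : ℕ → ℝ) : ℕ → ℂ → ℂ
  | 0, _ => 1
  | n + 1, z => z * Phi c n z - (c n : ℂ) * z ^ n * Phi c n z⁻¹

/-- CMV Laurent polynomials: ψ_{2m} z = z^m Φ_{2m}(1/z), ψ_{2m+1} z = z^{-m} Φ_{2m+1}(z). -/
noncomputable def psi (c : ℕ → ℝ) (n : ℕ) (z : ℂ) : ℂ :=
  if Even n then z ^ (n / 2) * Phi c n z⁻¹
  else z ^ (-((n / 2 : ℕ) : ℤ)) * Phi c n z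

/-- Verblunsky parameters of the Jacobi OPUC. -/
noncomputable def jacobiA (α β : ℝ) (n : ℕ) : ℝ :=
  -(α + 1 / 2 + (-1 : ℝ) ^ (n + 1) * (β + 1 / 2)) / (n + α + β + 2)

/-- Sieved Verblunsky parameters: a_n(N) = a_{k-1} if n = N k - 1 (k ≥ 1), 0 otherwise. -/
noncomputable def sievedA (α β : ℝ) (N n : ℕ) : ℝ :=
  if N ∣ (n + 1) then jacobiA α β ((n + 1) / N - 1) else 0

/-- The primitive N-th root of unity q = exp(2πi/N). -/
noncomputable def qN (N : ℕ) : ℂ := Complex.exp (2 * Real.pi * Complex.I / N)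

/-- The coefficients A_k(z;N) of the Dunkl-type operator L(N). -/
noncomputable def Acoef (α β : ℝ) (N k : ℕ) (z : ℂ) : ℂ :=
  if Even N then
    ((α : ℂ) + β + 1 + (-1 : ℂ) ^ k * ((α : ℂ) - β)) * z ^ 2 / (qN N ^ k - z ^ 2)
  else
    (((α : ℂ) + β + 1) * z ^ 2 +
        (if Even k then qN N ^ ((k : ℤ) / 2) else qN N ^ (((k : ℤ) - (N : ℤ)) / 2)) *
          ((α : ℂ) - β) * z) /
      (qN N ^ k - z ^ 2)

/-- B(z) = N((α+β+1) z^{2N} + (α-β) z^N)/(z^{2N} - 1). -/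
noncomputable def Bfun (α β : ℝ) (N : ℕ) (z : ℂ) : ℂ :=
  (N : ℂ) * (((α : ℂ) + β + 1) * z ^ (2 * N) + ((α : ℂ) - β) * z ^ N) / (z ^ (2 * N) - 1)

/-- The Dunkl-type operator L(N). -/
noncomputable def Lop (α β : ℝ) (N : ℕ) (f : ℂ → ℂ) : ℂ → ℂ := fun z =>
  z * deriv f z + ∑ k ∈ Finset.range N, Acoef α β N k z * (f (qN N ^ k / z) - f z)

/-- A function ℂ∖{0} → ℂ is a Laurent polynomial. -/
def IsLaurentPoly (f : ℂ → ℂ) : Prop :=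
  ∃ (m : ℕ) (p : Polynomial ℂ), ∀ z : ℂ, z ≠ 0 → f z = Polynomial.eval z p / z ^ m

/-- Sieved Jacobi polynomial of the first kind, as a function of z (x = z + 1/z). -/
noncomputable def sievP (α β : ℝ) (N n : ℕ) (z : ℂ) : ℂ :=
  psi (sievedA α β N) (2 * n) z
    + (1 + (sievedA α β N (2 * n - 1) : ℂ)) * psi (sievedA α β N) (2 * n - 1) z

/-- χ_n(z) = (z - 1/z) Q_{n-1}(x(z)), with Q the sieved Jacobi polynomial of 2nd kind. -/
noncomputable def sievChi (α β : ℝ) (N n : ℕ) (z : ℂ) : ℂ :=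
  -psi (sievedA α β N) (2 * n) z
    + (1 - (sievedA α β N (2 * n - 1) : ℂ)) * psi (sievedA α β N) (2 * n - 1) z

/-!
Put `s = α + β + 1`, `d = α - β` and let `r = qN (2 * N)`, so that `r ^ 2 = q` and `r ^ N = -1`.
Each `A_k` is the sum of two simple fractions `c_j z / (r ^ j - z)`, for `j = k` and `j = k + N`,
with `c_j = (s + (-1) ^ j d) / 2`, whatever the parity of `N`. Since `(-1) ^ j = r ^ (j N)`,
orthogonality of the powers of `r` gives `∑ A_k = -B`. In `L(N)²` the coefficient of
`f (q ^ m z) - f z` is `∑_j A_j(z) A_{j+m}(q ^ j / z)`. Expand it into simple fractions: with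
`u = r ^ i`, the one with pole `u`, taken at `z`, times the one with pole `u v`, taken at
`u ^ 2 / z`, is a multiple of the difference of the simple fractions in `z` with poles `u` and
`u / v`. These are exchanged by an index shift, so that the sum telescopes to `0` around the
circle. What survives of `L(N)²` is local, and `B(q ^ j / z) = N s - B(z)` accounts for the
subtracted term `N s L(N)`.
-/

section RootsOfUnity

theorem sum_range_add_of_periodic {M : Type*} [AddCommMonoid M] {g : ℕ → M} {n : ℕ}
    (hg : Function.Periodic g n) (m : ℕ) :
    ∑ j ∈ range n, g (j + m) = ∑ j ∈ range n, g j := by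
  calc ∑ j ∈ range n, g (j + m) = ∑ j ∈ Ico m (m + n), g (j % n) := by
        simp only [sum_Ico_eq_sum_range, hg.map_mod_nat, Nat.add_sub_cancel_left, add_comm _ m]
    _ = ∑ j ∈ range n, g j := by
        rw [← Nat.image_Ico_mod m n, sum_image (Nat.mod_injOn_Ico m n)]

theorem sum_range_two_mul_of_periodic {R : Type*} [NonUnitalNonAssocSemiring R] {g h : ℕ → R}
    {n : ℕ} (hh : Function.Periodic h n) :
    ∑ j ∈ range (2 * n), g j * h j = ∑ j ∈ range n, (g j + g (j + n)) * h j := by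
  simp only [two_mul, sum_range_add, add_mul, sum_add_distrib, add_comm n, hh _]

theorem sum_range_pow_pow_of_isPrimitiveRoot {R : Type*} [CommRing R] [IsDomain R] {n : ℕ} {ζ : R}
    (hζ : IsPrimitiveRoot ζ n) (m : ℕ) :
    ∑ j ∈ range n, (ζ ^ m) ^ j = if n ∣ m then (n : R) else 0 := by
  split_ifs with hm
  · simp [(hζ.pow_eq_one_iff_dvd m).2 hm]
  · have hne : ζ ^ m - 1 ≠ 0 := sub_ne_zero.2 (mt (hζ.pow_eq_one_iff_dvd m).1 hm)
    refine eq_zero_of_ne_zero_of_mul_right_eq_zero hne ?_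
    rw [geom_sum_mul, pow_right_comm, hζ.pow_eq_one, one_pow, sub_self]

variable {K : Type*} [Field K] {n : ℕ} {ζ : K}

theorem sum_pow_mul_div_sub_of_isPrimitiveRoot (hζ : IsPrimitiveRoot ζ n) {w : K}
    (hw : w ^ n ≠ 1) {l : ℕ} (hl : 0 < l) (hln : l ≤ n) :
    ∑ j ∈ range n, (ζ ^ j) ^ l * (w / (ζ ^ j - w)) = n * w ^ l / (1 - w ^ n) := by
  have expand (j : ℕ) : (ζ ^ j) ^ l * (w / (ζ ^ j - w)) * (1 - w ^ n)
      = ∑ i ∈ range n, w * w ^ (n - 1 - i) * (ζ ^ (l + i)) ^ j := by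
    have hpow : (ζ ^ j) ^ n = 1 := by rw [pow_right_comm, hζ.pow_eq_one, one_pow]
    have hne : ζ ^ j - w ≠ 0 := sub_ne_zero.2 fun h => hw (h ▸ hpow)
    rw [← hpow, ← geom_sum₂_mul, mul_comm (∑ _ ∈ _, _), ← mul_assoc, mul_assoc (_ ^ l),
      div_mul_cancel₀ _ hne, mul_sum]
    refine sum_congr rfl fun i _ => ?_
    rw [pow_right_comm ζ (l + i), pow_add]
    ring
  have hdvd {i : ℕ} (hi : i ∈ range n) : n ∣ l + i ↔ i = n - l := by
    rw [mem_range] at hi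
    refine ⟨fun h => ?_, fun h => ⟨1, by omega⟩⟩
    have : l + i = n := Nat.eq_of_dvd_of_lt_two_mul (by omega) h (by omega)
    omega
  rw [eq_div_iff (sub_ne_zero.2 hw.symm), sum_mul]
  simp only [expand]
  rw [sum_comm]
  simp only [← mul_sum, sum_range_pow_pow_of_isPrimitiveRoot hζ]
  rw [sum_eq_single_of_mem (n - l) (mem_range.2 (by omega))
    fun i hi hne => by rw [if_neg (mt (hdvd hi).1 hne), mul_zero],
    if_pos ⟨1, by omega⟩, mul_comm, ← pow_succ', show n - 1 - (n - l) + 1 = l by omega]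

/-- The simple fraction `c_j z / (ζ ^ j - z)`, the term with pole at `ζ ^ j` in the partial
fraction expansion of a rational function vanishing at `0`. -/
def poleTerm (ζ : K) (c : ℕ → K) (j : ℕ) (z : K) : K :=
  c j * (z / (ζ ^ j - z))

variable {c : ℕ → K}

theorem poleTerm_periodic (hζ : ζ ^ n = 1) (hc : Function.Periodic c n) (z : K) :
    Function.Periodic (fun j => poleTerm ζ c j z) n := fun j => by
  simp only [poleTerm, hc j, pow_add, hζ, mul_one]

theorem div_sub_mul_sq_div_sub {u v z : K} (hz : z ≠ 0) (hu : u ≠ 0) (hv : v ≠ 1)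
    (huz : u ≠ z) (huvz : u ≠ v * z) :
    z / (u - z) * (u ^ 2 / z / (u * v - u ^ 2 / z))
      = (v - 1)⁻¹ * (z / (u - z) - v * z / (u - v * z)) := by
  grind

theorem sum_poleTerm_mul_poleTerm_reflection (hζ : ζ ^ n = 1) {m : ℕ}
    (hc : Function.Periodic c n) (hcm : Function.Periodic c (2 * m)) (hm : ζ ^ m ≠ 1)
    {z : K} (hz : z ≠ 0) (hzn : z ^ n ≠ 1) :
    ∑ j ∈ range n, poleTerm ζ c j z * poleTerm ζ c (j + m) ((ζ ^ j) ^ 2 / z) = 0 := by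
  have hn : n ≠ 0 := by rintro rfl; simp at hzn
  have hζ0 : ζ ≠ 0 := by rintro rfl; simp [hn] at hζ
  have hroot (j : ℕ) : (ζ ^ j) ^ n = 1 := by rw [pow_right_comm, hζ, one_pow]
  let g (j : ℕ) : K := c j * c (j + m) * (ζ ^ m * z / (ζ ^ j - ζ ^ m * z))
  have hg : Function.Periodic g n := fun j => by
    simp only [g, add_right_comm j n m, hc _, pow_add ζ j n, hζ, mul_one]
  have g_shift (j : ℕ) : g (j + m) = c j * c (j + m) * (z / (ζ ^ j - z)) := by
    have hcj : c (j + m + m) = c j := by rw [add_assoc, ← two_mul, hcm]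
    simp only [g, hcj, pow_add ζ j m, mul_comm (ζ ^ j), ← mul_sub]
    rw [mul_div_mul_left _ _ (pow_ne_zero m hζ0), mul_comm (c (j + m))]
  have telescope (j : ℕ) : poleTerm ζ c j z * poleTerm ζ c (j + m) ((ζ ^ j) ^ 2 / z)
      = (ζ ^ m - 1)⁻¹ * (g (j + m) - g j) := by
    have hjz : ζ ^ j ≠ z := fun h => hzn (h ▸ hroot j)
    have hjmz : ζ ^ j ≠ ζ ^ m * z := fun h => hzn <| by
      simpa [mul_pow, hroot] using (congrArg (· ^ n) h).symm
    have h := div_sub_mul_sq_div_sub hz (pow_ne_zero j hζ0) hm hjz hjmz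
    simp only [poleTerm, g_shift, g, pow_add]
    linear_combination c j * c (j + m) * h
  simp only [telescope, ← mul_sum, sum_sub_distrib, sum_range_add_of_periodic hg, sub_self,
    mul_zero]

end RootsOfUnity

section DunklCoefficients

variable {N : ℕ}

theorem isPrimitiveRoot_qN (hN : N ≠ 0) : IsPrimitiveRoot (qN N) N :=
  Complex.isPrimitiveRoot_exp N hN

theorem qN_ne_zero (N : ℕ) : qN N ≠ 0 :=
  Complex.exp_ne_zero _

theorem qN_pow_self (N : ℕ) : qN N ^ N = 1 := by
  rcases eq_or_ne N 0 with rfl | hN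
  · exact pow_zero _
  · exact (isPrimitiveRoot_qN hN).pow_eq_one

theorem qN_two_mul_sq (N : ℕ) : qN (2 * N) ^ 2 = qN N := by
  rw [qN, qN, ← Complex.exp_nat_mul]
  congr 1
  push_cast
  field_simp

theorem qN_pow_eq_sq (N k : ℕ) : qN N ^ k = (qN (2 * N) ^ k) ^ 2 := by
  rw [← qN_two_mul_sq, pow_right_comm]

theorem qN_two_mul_pow_self (hN : N ≠ 0) : qN (2 * N) ^ N = -1 := by
  have hr : IsPrimitiveRoot (qN (2 * N)) (2 * N) := isPrimitiveRoot_qN (by omega)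
  exact (hr.pow (by omega) (mul_comm 2 N)).eq_neg_one_of_two_right

theorem qN_pow_sub_sq_ne_zero {z : ℂ} (hzN : z ^ (2 * N) ≠ 1) (k : ℕ) : qN N ^ k - z ^ 2 ≠ 0 := by
  refine sub_ne_zero.2 fun h => hzN ?_
  rw [pow_mul, ← h, pow_right_comm, qN_pow_self, one_pow]

theorem qN_pow_div_pow {z : ℂ} (k : ℕ) : (qN N ^ k / z) ^ N = (z ^ N)⁻¹ := by
  rw [div_pow, pow_right_comm, qN_pow_self, one_pow, one_div]

theorem qN_pow_div_pow_ne_one {z : ℂ} (hzN : z ^ (2 * N) ≠ 1) (k : ℕ) :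
    (qN N ^ k / z) ^ (2 * N) ≠ 1 := by
  rwa [mul_comm, pow_mul, qN_pow_div_pow, inv_pow, ← pow_mul, mul_comm, inv_ne_one]

/-- The coefficients `c_j = (α + β + 1 + (-1) ^ j (α - β)) / 2` in the partial fraction expansion
of the `A_k(z; N)`: those attached to `(2N)`-th roots of unity `ζ` with `ζ ^ N = 1` are equal to
`α + 1 / 2`, the others to `β + 1 / 2`. -/
noncomputable def poleWeight (α β : ℝ) (j : ℕ) : ℂ :=
  (((α : ℂ) + β + 1) + (-1) ^ j * ((α : ℂ) - β)) / 2

variable (α β : ℝ)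

theorem poleWeight_periodic_two_mul (m : ℕ) : Function.Periodic (poleWeight α β) (2 * m) :=
  fun j => by simp [poleWeight, pow_add]

theorem qN_zpow_half_of_odd (hN : Odd N) (k : ℕ) :
    (if Even k then qN N ^ ((k : ℤ) / 2) else qN N ^ (((k : ℤ) - (N : ℤ)) / 2))
      = (-1) ^ k * qN (2 * N) ^ k := by
  have hN0 : N ≠ 0 := hN.pos.ne'
  have hzpow (i : ℤ) : qN N ^ i = qN (2 * N) ^ (2 * i) := by
    rw [← qN_two_mul_sq, zpow_mul, zpow_ofNat]
  simp only [hzpow]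
  split_ifs with hk
  · rw [Int.mul_ediv_cancel' (by exact_mod_cast hk.two_dvd), zpow_natCast, hk.neg_one_pow, one_mul]
  · have hk : Odd k := Nat.not_even_iff_odd.1 hk
    have heven : (2 : ℤ) ∣ k - N := by
      obtain ⟨⟨i, rfl⟩, ⟨n, rfl⟩⟩ := And.intro hk hN
      omega
    rw [Int.mul_ediv_cancel' heven, zpow_sub₀ (qN_ne_zero _), zpow_natCast, zpow_natCast,
      qN_two_mul_pow_self hN0, hk.neg_one_pow, div_neg, div_one, neg_one_mul]

theorem Acoef_eq_poleTerm_add_poleTerm {z : ℂ} (hzN : z ^ (2 * N) ≠ 1) (k : ℕ) :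
    Acoef α β N k z = poleTerm (qN (2 * N)) (poleWeight α β) k z
      + poleTerm (qN (2 * N)) (poleWeight α β) (k + N) z := by
  have hN : N ≠ 0 := by rintro rfl; simp at hzN
  have hden := qN_pow_sub_sq_ne_zero hzN k
  have hneg : qN (2 * N) ^ (k + N) = -qN (2 * N) ^ k := by
    rw [pow_add, qN_two_mul_pow_self hN, mul_neg_one]
  rw [Acoef]
  simp only [poleTerm, poleWeight, hneg, pow_add (-1 : ℂ)]
  rw [qN_pow_eq_sq, sq_sub_sq] at hden ⊢
  obtain ⟨hadd, hsub⟩ := mul_ne_zero_iff.1 hden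
  have hneg_sub : -qN (2 * N) ^ k - z ≠ 0 := by
    rw [← neg_add']
    exact neg_ne_zero.2 hadd
  rcases N.even_or_odd with hN_even | hN_odd
  · rw [if_pos hN_even, hN_even.neg_one_pow]
    field_simp
    ring
  · rw [if_neg (Nat.not_even_iff_odd.2 hN_odd), qN_zpow_half_of_odd hN_odd, hN_odd.neg_one_pow]
    field_simp
    ring

theorem Acoef_periodic {z : ℂ} (hzN : z ^ (2 * N) ≠ 1) :
    Function.Periodic (fun k => Acoef α β N k z) N := fun k => by
  have hper := poleTerm_periodic (qN_pow_self (2 * N)) (poleWeight_periodic_two_mul α β N) z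
  simp only [Acoef_eq_poleTerm_add_poleTerm α β hzN, add_assoc, ← two_mul, hper k]
  exact add_comm _ _

theorem sum_Acoef {z : ℂ} (hzN : z ^ (2 * N) ≠ 1) :
    ∑ k ∈ range N, Acoef α β N k z = -Bfun α β N z := by
  have hN : N ≠ 0 := by rintro rfl; simp at hzN
  have hr : IsPrimitiveRoot (qN (2 * N)) (2 * N) := isPrimitiveRoot_qN (by omega)
  have hsum {l : ℕ} (hl : 0 < l) (hlN : l ≤ 2 * N) :=
    sum_pow_mul_div_sub_of_isPrimitiveRoot hr hzN hl hlN
  have hterm (j : ℕ) : poleTerm (qN (2 * N)) (poleWeight α β) j z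
      = ((α : ℂ) + β + 1) / 2 * ((qN (2 * N) ^ j) ^ (2 * N) * (z / (qN (2 * N) ^ j - z)))
        + ((α : ℂ) - β) / 2 * ((qN (2 * N) ^ j) ^ N * (z / (qN (2 * N) ^ j - z))) := by
    rw [pow_right_comm, qN_pow_self, pow_right_comm _ j N, qN_two_mul_pow_self hN, poleTerm,
      poleWeight]
    ring
  calc ∑ k ∈ range N, Acoef α β N k z
      = ∑ j ∈ range (2 * N), poleTerm (qN (2 * N)) (poleWeight α β) j z := by
        simp only [Acoef_eq_poleTerm_add_poleTerm α β hzN, two_mul N, sum_range_add,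
          sum_add_distrib, add_comm N]
    _ = -Bfun α β N z := by
        simp only [hterm, sum_add_distrib, ← mul_sum]
        rw [hsum (by omega) le_rfl, hsum (by omega) (by omega), Bfun, ← neg_sub (z ^ (2 * N)),
          div_neg, div_neg]
        push_cast
        ring

theorem sum_Acoef_mul_Acoef_reflection {z : ℂ} (hz : z ≠ 0) (hzN : z ^ (2 * N) ≠ 1) {m : ℕ}
    (hm : ¬N ∣ m) :
    ∑ j ∈ range N, Acoef α β N j z * Acoef α β N (j + m) (qN N ^ j / z) = 0 := by
  have hN : N ≠ 0 := by rintro rfl; simp at hzN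
  have hr : IsPrimitiveRoot (qN (2 * N)) (2 * N) := isPrimitiveRoot_qN (by omega)
  have hvanish {l : ℕ} (hl : ¬N ∣ l) := sum_poleTerm_mul_poleTerm_reflection
    (qN_pow_self (2 * N)) (poleWeight_periodic_two_mul α β N) (poleWeight_periodic_two_mul α β l)
    (mt (hr.pow_eq_one_iff_dvd l).1 fun h => hl (dvd_of_mul_left_dvd h)) hz hzN
  have hper : Function.Periodic (fun j => Acoef α β N (j + m) (qN N ^ j / z)) N := fun j => by
    simp only [pow_add, qN_pow_self, mul_one, add_right_comm j N m]
    exact Acoef_periodic α β (qN_pow_div_pow_ne_one hzN j) (j + m)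
  have hsplit (j : ℕ) :=
    Acoef_eq_poleTerm_add_poleTerm α β (qN_pow_div_pow_ne_one hzN j) (j + m)
  calc ∑ j ∈ range N, Acoef α β N j z * Acoef α β N (j + m) (qN N ^ j / z)
      = ∑ j ∈ range (2 * N),
          poleTerm (qN (2 * N)) (poleWeight α β) j z * Acoef α β N (j + m) (qN N ^ j / z) := by
        rw [sum_range_two_mul_of_periodic hper]
        simp only [Acoef_eq_poleTerm_add_poleTerm α β hzN]
    _ = 0 := by
        simp only [hsplit, mul_add, sum_add_distrib, add_assoc _ m N]
        simp only [qN_pow_eq_sq N]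
        rw [hvanish hm, hvanish (by rwa [Nat.dvd_add_self_right]), add_zero]

theorem differentiableAt_Acoef {z : ℂ} (hzN : z ^ (2 * N) ≠ 1) (k : ℕ) :
    DifferentiableAt ℂ (Acoef α β N k) z := by
  have := qN_pow_sub_sq_ne_zero hzN k
  unfold Acoef
  split_ifs <;> fun_prop (disch := assumption)

theorem Bfun_qN_pow_div {z : ℂ} (hz : z ≠ 0) (hzN : z ^ (2 * N) ≠ 1) (j : ℕ) :
    Bfun α β N (qN N ^ j / z) = N * ((α : ℂ) + β + 1) - Bfun α β N z := by
  simp only [Bfun, mul_comm 2 N, pow_mul, qN_pow_div_pow] at hzN ⊢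
  have hzN0 : z ^ N ≠ 0 := pow_ne_zero N hz
  generalize z ^ N = t at *
  have hden : t ^ 2 - 1 ≠ 0 := sub_ne_zero.2 hzN
  have hinv : t⁻¹ ^ 2 - 1 = -(t ^ 2 - 1) / t ^ 2 := by field_simp; ring
  rw [hinv]
  field_simp
  ring

theorem two_mul_Bfun_sub {z : ℂ} (hzN : z ^ (2 * N) ≠ 1) :
    2 * Bfun α β N z - N * ((α : ℂ) + β + 1) = N * ((α : ℂ) + β + 1)
      + 2 * (N : ℂ) * (((α : ℂ) + β + 1) + ((α : ℂ) - β) * z ^ N) / (z ^ (2 * N) - 1) := by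
  have hden : z ^ (2 * N) - 1 ≠ 0 := sub_ne_zero.2 hzN
  rw [Bfun]
  field_simp
  ring

end DunklCoefficients

section DunklOperator

variable {N : ℕ} (α β : ℝ) {f : ℂ → ℂ} {z : ℂ}

theorem sum_Acoef_mul_sum_Acoef_reflection (f : ℂ → ℂ) (hz : z ≠ 0) (hzN : z ^ (2 * N) ≠ 1) :
    ∑ j ∈ range N, Acoef α β N j z * ∑ k ∈ range N,
      Acoef α β N k (qN N ^ j / z) * (f (qN N ^ k / (qN N ^ j / z)) - f z) = 0 := by
  have rotation (j m : ℕ) : qN N ^ (m + j) / (qN N ^ j / z) = qN N ^ m * z := by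
    have := pow_ne_zero j (qN_ne_zero N)
    rw [pow_add]
    field_simp
  have reindex (j : ℕ) :
      ∑ k ∈ range N, Acoef α β N k (qN N ^ j / z) * (f (qN N ^ k / (qN N ^ j / z)) - f z)
        = ∑ m ∈ range N, Acoef α β N (j + m) (qN N ^ j / z) * (f (qN N ^ m * z) - f z) := by
    rw [← sum_range_add_of_periodic (m := j)]
    · simp only [rotation, add_comm j]
    · intro k
      simp only [Acoef_periodic α β (qN_pow_div_pow_ne_one hzN j) k, pow_add, qN_pow_self, mul_one]
  simp only [reindex, mul_sum]
  rw [sum_comm]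
  simp only [← mul_assoc, ← sum_mul]
  refine sum_eq_zero fun m hm => ?_
  rcases eq_or_ne m 0 with rfl | hm0
  · rw [pow_zero, one_mul, sub_self, mul_zero]
  · have hmN : ¬N ∣ m := Nat.not_dvd_of_pos_of_lt (Nat.pos_of_ne_zero hm0) (mem_range.1 hm)
    rw [sum_Acoef_mul_Acoef_reflection α β hz hzN hmN, zero_mul]

theorem Lop_qN_pow_div (f : ℂ → ℂ) (hz : z ≠ 0) (hzN : z ^ (2 * N) ≠ 1) (j : ℕ) :
    Lop α β N f (qN N ^ j / z) = qN N ^ j / z * deriv f (qN N ^ j / z)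
      + ∑ k ∈ range N, Acoef α β N k (qN N ^ j / z) * (f (qN N ^ k / (qN N ^ j / z)) - f z)
      + (N * ((α : ℂ) + β + 1) - Bfun α β N z) * (f (qN N ^ j / z) - f z) := by
  have hsum := sum_Acoef α β (qN_pow_div_pow_ne_one hzN j)
  rw [Bfun_qN_pow_div α β hz hzN] at hsum
  simp only [Lop, mul_sub, sum_sub_distrib, ← sum_mul, hsum]
  ring

theorem sum_Acoef_mul_Lop_sub_Lop (f : ℂ → ℂ) (hz : z ≠ 0) (hzN : z ^ (2 * N) ≠ 1) :
    ∑ j ∈ range N, Acoef α β N j z * (Lop α β N f (qN N ^ j / z) - Lop α β N f z)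
      = ∑ j ∈ range N, Acoef α β N j z * (qN N ^ j / z * deriv f (qN N ^ j / z))
        + N * ((α : ℂ) + β + 1) * Lop α β N f z
        + (Bfun α β N z - N * ((α : ℂ) + β + 1)) * (z * deriv f z) := by
  have hterm (j : ℕ) : Acoef α β N j z * (Lop α β N f (qN N ^ j / z) - Lop α β N f z)
      = Acoef α β N j z * (qN N ^ j / z * deriv f (qN N ^ j / z))
        + Acoef α β N j z * ∑ k ∈ range N,
            Acoef α β N k (qN N ^ j / z) * (f (qN N ^ k / (qN N ^ j / z)) - f z)
        + (N * ((α : ℂ) + β + 1) - Bfun α β N z)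
            * (Acoef α β N j z * (f (qN N ^ j / z) - f z))
        - Acoef α β N j z * Lop α β N f z := by
    rw [Lop_qN_pow_div α β f hz hzN]
    ring
  have hdiff : ∑ j ∈ range N, Acoef α β N j z * (f (qN N ^ j / z) - f z)
      = Lop α β N f z - z * deriv f z := (add_sub_cancel_left _ _).symm
  simp only [hterm, sum_sub_distrib, sum_add_distrib]
  rw [sum_Acoef_mul_sum_Acoef_reflection α β f hz hzN, ← mul_sum, hdiff, ← sum_mul,
    sum_Acoef α β hzN]
  ring

theorem deriv_Lop (hz : z ≠ 0) (hzN : z ^ (2 * N) ≠ 1) (hf : DifferentiableAt ℂ f z)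
    (hfq : ∀ k < N, DifferentiableAt ℂ f (qN N ^ k / z)) (hf' : DifferentiableAt ℂ (deriv f) z) :
    deriv (Lop α β N f) z = deriv f z + z * deriv (deriv f) z
      + ∑ k ∈ range N, (deriv (Acoef α β N k) z * (f (qN N ^ k / z) - f z)
        + Acoef α β N k z * (deriv f (qN N ^ k / z) * (-(qN N ^ k) / z ^ 2) - deriv f z)) := by
  have hinv (k : ℕ) : HasDerivAt (fun w => qN N ^ k / w) (-(qN N ^ k) / z ^ 2) z := by
    simpa using (hasDerivAt_const z (qN N ^ k)).fun_div (hasDerivAt_id' z) hz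
  refine HasDerivAt.deriv (.add ?_ (.fun_sum fun k hk => ?_))
  · simpa using (hasDerivAt_id' z).fun_mul hf'.hasDerivAt
  · exact (differentiableAt_Acoef α β hzN k).hasDerivAt.mul
      (((hfq k (mem_range.1 hk)).hasDerivAt.comp z (hinv k)).sub hf.hasDerivAt)

theorem mul_deriv_Lop (hz : z ≠ 0) (hzN : z ^ (2 * N) ≠ 1) (hf : DifferentiableAt ℂ f z)
    (hfq : ∀ k < N, DifferentiableAt ℂ f (qN N ^ k / z)) (hf' : DifferentiableAt ℂ (deriv f) z) :
    z * deriv (Lop α β N f) z = z ^ 2 * deriv (deriv f) z + (1 + Bfun α β N z) * (z * deriv f z)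
      - ∑ k ∈ range N, Acoef α β N k z * (qN N ^ k / z * deriv f (qN N ^ k / z))
      + z * ∑ k ∈ range N, deriv (Acoef α β N k) z * (f (qN N ^ k / z) - f z) := by
  have hterm (k : ℕ) :
      z * (Acoef α β N k z * (deriv f (qN N ^ k / z) * (-(qN N ^ k) / z ^ 2) - deriv f z))
        = -(Acoef α β N k z * (qN N ^ k / z * deriv f (qN N ^ k / z)))
          - Acoef α β N k z * (z * deriv f z) := by
    field_simp
  rw [deriv_Lop α β hz hzN hf hfq hf', sum_add_distrib, mul_add, mul_add _ (∑ _ ∈ _, _),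
    mul_sum _ (fun k => Acoef α β N k z * _)]
  simp only [hterm, sum_sub_distrib, sum_neg_distrib, ← sum_mul, sum_Acoef α β hzN]
  ring

end DunklOperator

theorem IsLaurentPoly.differentiableOn {f : ℂ → ℂ} (hf : IsLaurentPoly f) :
    DifferentiableOn ℂ f {0}ᶜ := by
  obtain ⟨m, p, hfp⟩ := hf
  exact (p.differentiable.differentiableOn.div (by fun_prop) fun z hz => pow_ne_zero m hz).congr hfp

theorem stmt_16_general (α β : ℝ) (N : ℕ) (f : ℂ → ℂ) (hf : DifferentiableOn ℂ f {0}ᶜ)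
    (z : ℂ) (hz : z ≠ 0) (hz2 : z ^ (2 * N) ≠ 1) :
    Lop α β N (Lop α β N f) z - (N : ℂ) * ((α : ℂ) + β + 1) * Lop α β N f z
      = z ^ 2 * deriv (deriv f) z
        + z * (1 + (N : ℂ) * ((α : ℂ) + β + 1)
            + 2 * (N : ℂ) * (((α : ℂ) + β + 1) + ((α : ℂ) - β) * z ^ N)
              / (z ^ (2 * N) - 1)) * deriv f z
        + z * ∑ k ∈ Finset.range N,
            deriv (fun w => Acoef α β N k w) z * (f (qN N ^ k / z) - f z) := by
  have hopen : IsOpen ({0}ᶜ : Set ℂ) := isOpen_compl_singleton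
  have hf_at (w : ℂ) (hw : w ≠ 0) : DifferentiableAt ℂ f w :=
    hf.differentiableAt (hopen.mem_nhds hw)
  have hf' : DifferentiableAt ℂ (deriv f) z := (hf.deriv hopen).differentiableAt (hopen.mem_nhds hz)
  have hderiv := mul_deriv_Lop α β hz hz2 (hf_at z hz)
    (fun k _ => hf_at _ (div_ne_zero (pow_ne_zero k (qN_ne_zero N)) hz)) hf'
  have hreflect := sum_Acoef_mul_Lop_sub_Lop α β f hz hz2
  have hC := two_mul_Bfun_sub α β hz2
  rw [Lop]
  linear_combination hderiv + hreflect + z * deriv f z * hC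

/-- explicit form of H(N) = L(N)² - N(α+β+1)L(N) on Laurent polynomials. -/
theorem stmt_16 (α β : ℝ) (N : ℕ) (hN : 1 ≤ N) (f : ℂ → ℂ) (hf : IsLaurentPoly f)
    (z : ℂ) (hz : z ≠ 0) (hz2 : z ^ (2 * N) ≠ 1) :
    Lop α β N (Lop α β N f) z - (N : ℂ) * ((α : ℂ) + β + 1) * Lop α β N f z
      = z ^ 2 * deriv (deriv f) z
        + z * (1 + (N : ℂ) * ((α : ℂ) + β + 1)
            + 2 * (N : ℂ) * (((α : ℂ) + β + 1) + ((α : ℂ) - β) * z ^ N)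
              / (z ^ (2 * N) - 1)) * deriv f z
        + z * ∑ k ∈ Finset.range N,
            deriv (fun w => Acoef α β N k w) z * (f (qN N ^ k / z) - f z) :=
  stmt_16_general α β N f hf.differentiableOn z hz hz2
end

section
/- Assume α = β (the sieved ultraspherical case). For every integer n ≥ 1, the function 𝒫_n(z) = ψ_{2n}(z;N) + (1 + a_{2n−1}(N))·ψ_{2n−1}(z;N) satisfies, for all z ∈ ℂ with z ≠ 0 and z^{2N} ≠ 1, the eigenvalue equation z²·𝒫_n″(z) + C(z)·𝒫_n′(z) + Σ_{k=0}^{N−1} B_k(z)·(𝒫_n(q^k/z) − 𝒫_n(z)) = n·(n + (2α+1)N)·𝒫_n(z), where B_k(z) = 2(2α+1)q^k z²/(q^k − z²)² and C(z) = z·(1 + N(2α+1) + 2N(2α+1)/(z^{2N} − 1)). -/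
open Finset

/-!
In the ultraspherical case the Verblunsky parameters of even index vanish, so the Szegő recursion
gives `𝒫ₙ(z) = f(z) + f(1/z)` with `f = ψ_{2n-1}`, and `f(ζz) = ζ^j f(z)` for every `N`-th root of
unity `ζ`, where `1 ≤ j ≤ N` and `j ≡ n` modulo `N`. This homogeneity collapses the `N` reflections
in the Dunkl-type operator to the single one `z ↦ 1/z`: being an eigenfunction becomes a first-order
relation between `f'(z)`, `f(z)` and `f(1/z)`, which the recursion propagates from `ψ₁(z) = z`.
Differentiating it once more gives a second-order equation for `𝒫ₙ`; what remains there besides the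
two derivatives and the eigenvalue is the reflection sum, which Lagrange interpolation at the roots
of unity evaluates in closed form.
-/

section RootsOfUnity

open Polynomial in
lemma nodal_range_pow {K : Type*} [Field K] {q : K} {N : ℕ} (hN : 0 < N)
    (hq : IsPrimitiveRoot q N) : Lagrange.nodal (range N) (q ^ ·) = X ^ N - 1 := by
  rw [Lagrange.nodal_eq, X_pow_sub_one_eq_prod hN hq]
  refine prod_nbij (q ^ ·) (fun k _ => ?_) (by simpa using hq.injOn_pow) (fun ξ hξ => ?_)
    fun _ _ => rfl
  · rw [mem_nthRootsFinset hN, pow_right_comm, hq.pow_eq_one, one_pow]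
  · have : NeZero N := ⟨hN.ne'⟩
    obtain ⟨k, hk, rfl⟩ := hq.eq_pow_of_pow_eq_one ((mem_nthRootsFinset hN _).mp hξ)
    exact ⟨k, by simpa using hk, rfl⟩

open Polynomial in
lemma nodalWeight_range_pow {K : Type*} [Field K] {q : K} {N k : ℕ} (hq : IsPrimitiveRoot q N)
    (hk : k ∈ range N) : Lagrange.nodalWeight (range N) (q ^ ·) k = q ^ k / N := by
  have hN : 0 < N := (Nat.zero_le k).trans_lt (mem_range.mp hk)
  have hpow : (q ^ k) ^ (N - 1) * q ^ k = 1 := by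
    rw [pow_sub_one_mul hN.ne', pow_right_comm, hq.pow_eq_one, one_pow]
  rw [Lagrange.nodalWeight_eq_eval_derivative_nodal hk, nodal_range_pow hN hq]
  simp only [derivative_sub, derivative_X_pow, derivative_one, sub_zero, eval_mul, eval_pow,
    eval_X, eval_C]
  rw [inv_eq_iff_eq_inv, inv_div, eq_div_iff (pow_ne_zero _ (hq.ne_zero hN.ne')), mul_assoc, hpow,
    mul_one]

lemma pow_sub_ne_zero_of_pow_ne_one {K : Type*} [Field K] {q t : K} {N : ℕ} (hq : q ^ N = 1)
    (ht : t ^ N ≠ 1) (k : ℕ) : q ^ k - t ≠ 0 := by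
  intro h
  rw [← sub_eq_zero.mp h, pow_right_comm, hq, one_pow] at ht
  exact ht rfl

open Polynomial in
/- Lagrange interpolation of `X ^ j` at the `N`-th roots of unity. -/
lemma sum_pow_succ_div_pow_sub {K : Type*} [Field K] {q t : K} {N j : ℕ}
    (hq : IsPrimitiveRoot q N) (hj : j < N) (ht : t ^ N ≠ 1) :
    ∑ k ∈ range N, (q ^ k) ^ (j + 1) / (q ^ k - t) = N * t ^ j / (1 - t ^ N) := by
  have hN : 0 < N := by omega
  have hne := pow_sub_ne_zero_of_pow_ne_one hq.pow_eq_one ht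
  have hinj : Set.InjOn (q ^ ·) (range N : Set ℕ) := by simpa using hq.injOn_pow
  have hinterp := Lagrange.eq_interpolate_of_eval_eq (f := (X : K[X]) ^ j) (fun k => (q ^ k) ^ j)
    hinj (by simpa using hj) (fun k _ => by simp)
  have heval := congrArg (eval t) hinterp
  rw [Lagrange.eval_interpolate_not_at_node _ fun k _ h => hne k (sub_eq_zero.mpr h.symm),
    nodal_range_pow hN hq] at heval
  simp only [eval_pow, eval_X, eval_sub, eval_one] at heval
  rw [eq_div_iff (sub_ne_zero.mpr ht.symm), heval, sum_mul, mul_sum, mul_sum]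
  refine sum_congr rfl fun k hk => ?_
  rw [nodalWeight_range_pow hq hk]
  have : NeZero N := ⟨hN.ne'⟩
  have hN' : (N : K) ≠ 0 := hq.neZero'.out
  have hk' := hne k
  rw [← neg_sub (q ^ k) t]
  field_simp
  ring

lemma sum_pow_succ_div_pow_sub_sq {𝕜 : Type*} [NontriviallyNormedField 𝕜] {q t : 𝕜} {N j : ℕ}
    (hq : IsPrimitiveRoot q N) (hj : j < N) (ht : t ^ N ≠ 1) :
    ∑ k ∈ range N, (q ^ k) ^ (j + 1) / (q ^ k - t) ^ 2 =
      N * (j * t ^ (j - 1) * (1 - t ^ N) + N * t ^ (N - 1) * t ^ j) / (1 - t ^ N) ^ 2 := by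
  have hleft : HasDerivAt (fun s => ∑ k ∈ range N, (q ^ k) ^ (j + 1) / (q ^ k - s))
      (∑ k ∈ range N, (q ^ k) ^ (j + 1) / (q ^ k - t) ^ 2) t := by
    refine HasDerivAt.fun_sum fun k _ => ?_
    have hk := pow_sub_ne_zero_of_pow_ne_one hq.pow_eq_one ht k
    exact ((hasDerivAt_const t _).fun_div ((hasDerivAt_id t).const_sub _) hk).congr_deriv (by simp)
  have hright : HasDerivAt (fun s : 𝕜 => (N : 𝕜) * s ^ j / (1 - s ^ N))
      (N * (j * t ^ (j - 1) * (1 - t ^ N) + N * t ^ (N - 1) * t ^ j) / (1 - t ^ N) ^ 2) t :=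
    (((hasDerivAt_pow j t).const_mul (N : 𝕜)).fun_div ((hasDerivAt_pow N t).const_sub 1)
      (sub_ne_zero.mpr ht.symm)).congr_deriv (by ring)
  refine hleft.unique (hright.congr_of_eventuallyEq ?_)
  filter_upwards [(continuous_pow N).continuousAt.eventually_ne ht] with s hs
  exact sum_pow_succ_div_pow_sub hq hj hs

lemma sum_mul_div_pow_sub_sq_mul_pow {𝕜 : Type*} [NontriviallyNormedField 𝕜] {q t : 𝕜} {N j : ℕ}
    (hq : IsPrimitiveRoot q N) (hj : j ≤ N) (ht : t ^ N ≠ 1) :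
    ∑ k ∈ range N, q ^ k * t / (q ^ k - t) ^ 2 * (q ^ k) ^ j =
      N * t ^ j * (j * (1 - t ^ N) + N * t ^ N) / (1 - t ^ N) ^ 2 := by
  have hN : 0 < N := Nat.pos_of_ne_zero (by rintro rfl; simp at ht)
  have hlt : ∀ i < N, ∑ k ∈ range N, q ^ k * t / (q ^ k - t) ^ 2 * (q ^ k) ^ i =
      N * t ^ i * (i * (1 - t ^ N) + N * t ^ N) / (1 - t ^ N) ^ 2 := fun i hi =>
    calc ∑ k ∈ range N, q ^ k * t / (q ^ k - t) ^ 2 * (q ^ k) ^ i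
      _ = (∑ k ∈ range N, (q ^ k) ^ (i + 1) / (q ^ k - t) ^ 2) * t := by
        rw [sum_mul]
        exact sum_congr rfl fun k _ => by ring
      _ = N * (i * t ^ (i - 1) * t * (1 - t ^ N) + N * (t ^ (N - 1) * t) * t ^ i) /
          (1 - t ^ N) ^ 2 := by
        rw [sum_pow_succ_div_pow_sub_sq hq hi ht]
        ring
      _ = _ := by
        have hcast : (i : 𝕜) * t ^ (i - 1) * t = i * t ^ i := by
          cases i <;> simp [pow_succ, mul_assoc]
        rw [hcast, pow_sub_one_mul hN.ne']
        ring
  rcases hj.lt_or_eq with hj | rfl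
  · exact hlt j hj
  · simp_rw [pow_right_comm q _ j, hq.pow_eq_one, one_pow]
    have h := hlt 0 hN
    simp only [pow_zero] at h
    rw [h]
    push_cast
    ring

end RootsOfUnity

section DunklRelation

variable {𝕜 : Type*} [NontriviallyNormedField 𝕜]

/-- The divided difference of `f(z)` and `z^(2j) f(1/z)`, through which all reflections
`z ↦ ζ/z` with `ζ ^ N = 1` act on a function satisfying `f(ζz) = ζ^j f(z)`. -/
def reflectionQuotient (N j : ℕ) (f : 𝕜 → 𝕜) (z : 𝕜) : 𝕜 :=
  (f z - z ^ (2 * j) * f z⁻¹) / (z ^ (2 * N) - 1)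

/-- The relation `z f'(z) = ν f(z) - c (f(z) - z^(2j) f(1/z)) / (z^(2N) - 1)`. If `c = (2α + 1)N`,
`1 ≤ j ≤ N` and `f(ζz) = ζ^j f(z)` whenever `ζ ^ N = 1`, it says that `f` is an eigenfunction of the
Dunkl-type operator `Lop α α N`, with eigenvalue `ν + c`. -/
def IsDunklEigen (N j : ℕ) (c ν : 𝕜) (f : 𝕜 → 𝕜) : Prop :=
  ∀ z, z ≠ 0 → z ^ (2 * N) ≠ 1 → HasDerivAt f ((ν * f z - c * reflectionQuotient N j f z) / z) z

/-- The sum of `f` and its reflection `z ↦ f(1/z)`. -/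
def symmetrization (f : 𝕜 → 𝕜) (z : 𝕜) : 𝕜 :=
  f z + f z⁻¹

lemma isDunklEigen_id (N : ℕ) (c : 𝕜) : IsDunklEigen N 1 c 1 (fun z : 𝕜 => z) := by
  intro z hz _
  refine (hasDerivAt_id z).congr_deriv ?_
  simp only [reflectionQuotient]
  field_simp
  simp

variable {N j : ℕ} {c ν : 𝕜} {f : 𝕜 → 𝕜}

lemma reflectionQuotient_inv {z : 𝕜} (hj : j ≤ N) (hz : z ≠ 0) (hzN : z ^ (2 * N) ≠ 1) :
    reflectionQuotient N j f z⁻¹ = z ^ (2 * (N - j)) * reflectionQuotient N j f z := by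
  have hpow : z ^ (2 * N) = z ^ (2 * (N - j)) * z ^ (2 * j) := by
    rw [← pow_add, ← mul_add, Nat.sub_add_cancel hj]
  have hden := sub_ne_zero.mpr hzN
  have hden' := sub_ne_zero.mpr hzN.symm
  rw [hpow] at hden hden'
  simp only [reflectionQuotient, inv_inv, inv_pow, hpow]
  have hr : z ^ (2 * (N - j)) ≠ 0 := pow_ne_zero _ hz
  have hs : z ^ (2 * j) ≠ 0 := pow_ne_zero _ hz
  generalize z ^ (2 * (N - j)) = r at *
  generalize z ^ (2 * j) = s at *
  generalize f z⁻¹ = G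
  field_simp
  rw [div_eq_div_iff (by rwa [mul_comm]) (by rwa [mul_comm])]
  ring

lemma sum_reflection_symmetrization {q z : 𝕜} (hq : IsPrimitiveRoot q N) (hj : j ≤ N)
    (hf : ∀ ζ x, ζ ^ N = 1 → f (ζ * x) = ζ ^ j * f x) (g : 𝕜) (hzN : z ^ (2 * N) ≠ 1) :
    ∑ k ∈ range N, 2 * g * q ^ k * z ^ 2 / (q ^ k - z ^ 2) ^ 2
        * (symmetrization f (q ^ k / z) - symmetrization f z)
      = 2 * (N * g) * (z ^ (2 * j) * (j * (1 - z ^ (2 * N)) + N * z ^ (2 * N)) * f z⁻¹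
          + z ^ (2 * (N - j)) * ((N - j : ℕ) * (1 - z ^ (2 * N)) + N * z ^ (2 * N)) * f z
          - N * z ^ (2 * N) * symmetrization f z) / (1 - z ^ (2 * N)) ^ 2 := by
  have hroot (k : ℕ) : (q ^ k) ^ N = 1 := by rw [pow_right_comm, hq.pow_eq_one, one_pow]
  have hreflect (k : ℕ) :
      symmetrization f (q ^ k / z) = (q ^ k) ^ j * f z⁻¹ + (q ^ k) ^ (N - j) * f z := by
    have hinv : (q ^ k)⁻¹ ^ j = (q ^ k) ^ (N - j) := by
      rw [inv_pow]
      exact inv_eq_of_mul_eq_one_right (by rw [← pow_add, Nat.add_sub_of_le hj, hroot])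
    rw [symmetrization, div_eq_mul_inv, mul_inv, inv_inv, hf _ _ (hroot k),
      hf _ _ (by rw [inv_pow, hroot, inv_one]), hinv]
  have hsum (i : ℕ) (hi : i ≤ N) := sum_mul_div_pow_sub_sq_mul_pow (t := z ^ 2) hq hi
    (by rwa [← pow_mul])
  calc ∑ k ∈ range N, 2 * g * q ^ k * z ^ 2 / (q ^ k - z ^ 2) ^ 2
        * (symmetrization f (q ^ k / z) - symmetrization f z)
    _ = 2 * g * (f z⁻¹ * ∑ k ∈ range N, q ^ k * z ^ 2 / (q ^ k - z ^ 2) ^ 2 * (q ^ k) ^ j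
        + f z * ∑ k ∈ range N, q ^ k * z ^ 2 / (q ^ k - z ^ 2) ^ 2 * (q ^ k) ^ (N - j)
        - symmetrization f z
          * ∑ k ∈ range N, q ^ k * z ^ 2 / (q ^ k - z ^ 2) ^ 2 * (q ^ k) ^ 0) := by
      simp only [mul_sum, ← sum_add_distrib, ← sum_sub_distrib, hreflect]
      exact sum_congr rfl fun k _ => by ring
    _ = _ := by
      rw [hsum j hj, hsum (N - j) (Nat.sub_le N j), hsum 0 (Nat.zero_le N)]
      simp only [← pow_mul, Nat.cast_zero, pow_zero, zero_mul, zero_add]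
      ring

lemma natCast_mul_pow_pred {z : 𝕜} (hz : z ≠ 0) (m : ℕ) :
    (m : 𝕜) * z ^ (m - 1) = m * z ^ m / z := by
  cases m with
  | zero => simp
  | succ m => rw [Nat.add_sub_cancel, pow_succ, mul_div_assoc, mul_div_cancel_right₀ _ hz]

lemma sq_mul_deriv_deriv {P Q : 𝕜 → 𝕜} {R z : 𝕜} (hz : z ≠ 0)
    (hP : ∀ᶠ x in nhds z, HasDerivAt P (Q x / x) x) (hQ : HasDerivAt Q (R / z) z) :
    z ^ 2 * deriv (deriv P) z = R - Q z := by
  have hderiv : deriv P =ᶠ[nhds z] fun x => Q x / x := hP.mono fun _ hx => hx.deriv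
  rw [hderiv.deriv_eq, (hQ.fun_div (hasDerivAt_id' z) hz).deriv]
  field_simp

namespace IsDunklEigen

lemma hasDerivAt_comp_inv (h : IsDunklEigen N j c ν f) (hj : j ≤ N) {z : 𝕜} (hz : z ≠ 0)
    (hzN : z ^ (2 * N) ≠ 1) :
    HasDerivAt (fun x => f x⁻¹)
      ((-ν * f z⁻¹ + c * z ^ (2 * (N - j)) * reflectionQuotient N j f z) / z) z := by
  have hzN' : z⁻¹ ^ (2 * N) ≠ 1 := by rwa [inv_pow, Ne, inv_eq_one]
  refine ((h z⁻¹ (inv_ne_zero hz) hzN').comp z (hasDerivAt_inv hz)).congr_deriv ?_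
  rw [reflectionQuotient_inv hj hz hzN]
  field_simp
  ring

lemma id_mul (h : IsDunklEigen N j c ν f) :
    IsDunklEigen N (j + 1) c (ν + 1) (fun z => z * f z) := by
  intro z hz hzN
  refine ((hasDerivAt_id z).mul (h z hz hzN)).congr_deriv ?_
  simp only [reflectionQuotient, id]
  field_simp [sub_ne_zero.mpr hzN]
  ring

/- The condition on `a` makes the terms of `z f' - (ν + 1) f` without denominator cancel. -/
lemma id_mul_sub_reflection (h : IsDunklEigen N N c ν f) {a : 𝕜} (ha : a * (2 * ν + c) = -c) :
    IsDunklEigen N 1 c (ν + 1) (fun z => z * (f z - a * f z⁻¹)) := by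
  intro z hz hzN
  have hinv := h.hasDerivAt_comp_inv le_rfl hz hzN
  refine ((hasDerivAt_id z).mul ((h z hz hzN).sub (hinv.const_mul a))).congr_deriv ?_
  have hden := sub_ne_zero.mpr hzN
  simp only [reflectionQuotient, id, inv_inv, Nat.sub_self, mul_zero, pow_zero, Pi.sub_apply]
  generalize f z⁻¹ = G
  field_simp
  linear_combination z ^ 2 * (z ^ (2 * N) - 1) * G * ha

lemma hasDerivAt_reflectionQuotient (h : IsDunklEigen N j c ν f) (hj : j ≤ N) {z : 𝕜} (hz : z ≠ 0)
    (hzN : z ^ (2 * N) ≠ 1) :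
    HasDerivAt (reflectionQuotient N j f)
      ((ν * (f z + z ^ (2 * j) * f z⁻¹) - 2 * j * z ^ (2 * j) * f z⁻¹
        - (c * (1 + z ^ (2 * N)) + 2 * N * z ^ (2 * N)) * reflectionQuotient N j f z)
        / (z ^ (2 * N) - 1) / z) z := by
  have hden := sub_ne_zero.mpr hzN
  have hpow : z ^ (2 * N) = z ^ (2 * (N - j)) * z ^ (2 * j) := by
    rw [← pow_add, ← mul_add, Nat.sub_add_cancel hj]
  have hmul := (hasDerivAt_pow (2 * j) z).mul (h.hasDerivAt_comp_inv hj hz hzN)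
  refine ((h z hz hzN).sub hmul |>.div ((hasDerivAt_pow (2 * N) z).sub_const 1) hden).congr_deriv ?_
  rw [natCast_mul_pow_pred hz, natCast_mul_pow_pred hz]
  push_cast
  simp only [Pi.sub_apply, Pi.mul_apply]
  have hnum : f z - z ^ (2 * j) * f z⁻¹ = (z ^ (2 * N) - 1) * reflectionQuotient N j f z := by
    rw [reflectionQuotient, mul_div_cancel₀ _ hden]
  rw [hnum]
  generalize reflectionQuotient N j f z = D
  rw [hpow] at hden ⊢
  field_simp
  ring

lemma hasDerivAt_symmetrization (h : IsDunklEigen N j c ν f) (hj : j ≤ N) {z : 𝕜} (hz : z ≠ 0)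
    (hzN : z ^ (2 * N) ≠ 1) :
    HasDerivAt (symmetrization f)
      ((ν * (f z - f z⁻¹) + c * (z ^ (2 * (N - j)) - 1) * reflectionQuotient N j f z) / z) z :=
  ((h z hz hzN).add (h.hasDerivAt_comp_inv hj hz hzN)).congr_deriv (by ring)

lemma sq_mul_deriv_deriv_symmetrization (h : IsDunklEigen N j c ν f) (hj : j ≤ N) {z : 𝕜}
    (hz : z ≠ 0) (hzN : z ^ (2 * N) ≠ 1) :
    z ^ 2 * deriv (deriv (symmetrization f)) z
        + z * (1 + c + 2 * c / (z ^ (2 * N) - 1)) * deriv (symmetrization f) z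
        + 2 * c * (z ^ (2 * j) * (j * (1 - z ^ (2 * N)) + N * z ^ (2 * N)) * f z⁻¹
            + z ^ (2 * (N - j)) * ((N - j : ℕ) * (1 - z ^ (2 * N)) + N * z ^ (2 * N)) * f z
            - N * z ^ (2 * N) * symmetrization f z) / (1 - z ^ (2 * N)) ^ 2
      = ν * (ν + c) * symmetrization f z := by
  have hdomain : ∀ᶠ x in nhds z, x ≠ 0 ∧ x ^ (2 * N) ≠ 1 :=
    (eventually_ne_nhds hz).and ((continuous_pow (2 * N)).continuousAt.eventually_ne hzN)
  have hpow : z ^ (2 * N) = z ^ (2 * (N - j)) * z ^ (2 * j) := by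
    rw [← pow_add, ← mul_add, Nat.sub_add_cancel hj]
  have hfirst := ((h z hz hzN).sub (h.hasDerivAt_comp_inv hj hz hzN)).const_mul ν
  have hsecond := (((hasDerivAt_pow (2 * (N - j)) z).sub_const 1).const_mul c).mul
    (h.hasDerivAt_reflectionQuotient hj hz hzN)
  have hQ := (hfirst.add hsecond).congr_deriv (eq_div_of_mul_eq hz rfl)
  rw [sq_mul_deriv_deriv hz (hdomain.mono fun x hx => h.hasDerivAt_symmetrization hj hx.1 hx.2)
    hQ, (h.hasDerivAt_symmetrization hj hz hzN).deriv, natCast_mul_pow_pred hz]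
  push_cast
  have hden := sub_ne_zero.mpr hzN
  have hden' := sub_ne_zero.mpr hzN.symm
  have hF : f z = (z ^ (2 * N) - 1) * reflectionQuotient N j f z + z ^ (2 * j) * f z⁻¹ := by
    rw [reflectionQuotient, mul_div_cancel₀ _ hden, sub_add_cancel]
  rw [Nat.cast_sub hj, ← neg_sub (z ^ (2 * N)) 1, symmetrization, hF]
  rw [hpow] at hden ⊢
  field_simp
  ring

theorem eigenvalue_equation_symmetrization {q z g : 𝕜} (h : IsDunklEigen N j (N * g) ν f)
    (hq : IsPrimitiveRoot q N) (hj : j ≤ N) (hf : ∀ ζ x, ζ ^ N = 1 → f (ζ * x) = ζ ^ j * f x)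
    (hz : z ≠ 0) (hzN : z ^ (2 * N) ≠ 1) :
    z ^ 2 * deriv (deriv (symmetrization f)) z
        + z * (1 + N * g + 2 * N * g / (z ^ (2 * N) - 1)) * deriv (symmetrization f) z
        + ∑ k ∈ range N, 2 * g * q ^ k * z ^ 2 / (q ^ k - z ^ 2) ^ 2
          * (symmetrization f (q ^ k / z) - symmetrization f z)
      = ν * (ν + g * N) * symmetrization f z := by
  rw [sum_reflection_symmetrization hq hj hf g hzN, mul_comm g (N : 𝕜), mul_assoc 2 (N : 𝕜) g]
  exact h.sq_mul_deriv_deriv_symmetrization hj hz hzN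

end IsDunklEigen

end DunklRelation

section Verblunsky

variable {c : ℕ → ℝ} {z : ℂ}

lemma psi_one (hc : c 0 = 0) : psi c 1 z = z := by
  simp [psi, Phi, hc]

lemma psi_two_mul_add_two (c : ℕ → ℝ) (n : ℕ) (hz : z ≠ 0) :
    psi c (2 * n + 2) z = psi c (2 * n + 1) z⁻¹ - c (2 * n + 1) * psi c (2 * n + 1) z := by
  have heven : Even (2 * n + 2) := ⟨n + 1, by ring⟩
  have hodd : ¬ Even (2 * n + 1) := by simp
  simp only [psi, if_pos heven, if_neg hodd, show (2 * n + 2) / 2 = n + 1 by omega,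
    show (2 * n + 1) / 2 = n by omega, Phi, inv_inv, zpow_neg, zpow_natCast, inv_pow]
  field_simp
  ring

lemma psi_two_mul_add_one {n : ℕ} (hc : c (2 * n) = 0) :
    psi c (2 * n + 1) z = z * psi c (2 * n) z⁻¹ := by
  have heven : Even (2 * n) := even_two_mul n
  have hodd : ¬ Even (2 * n + 1) := by simp
  simp only [psi, if_pos heven, if_neg hodd, show 2 * n / 2 = n by omega,
    show (2 * n + 1) / 2 = n by omega, Phi, hc, inv_inv, zpow_neg, zpow_natCast, inv_pow]
  push_cast
  ring

lemma psi_two_mul_add_three {n : ℕ} (hc : c (2 * (n + 1)) = 0) :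
    psi c (2 * (n + 1) + 1) z =
      z * (psi c (2 * n + 1) z - c (2 * n + 1) * psi c (2 * n + 1) z⁻¹) := by
  rw [psi_two_mul_add_one hc]
  rcases eq_or_ne z 0 with rfl | hz
  · simp
  · rw [mul_add_one, psi_two_mul_add_two c n (inv_ne_zero hz), inv_inv]

lemma psi_mul_of_pow_eq_one {N : ℕ} (hceven : ∀ n, c (2 * n) = 0)
    (hcodd : ∀ n, ¬ N ∣ n + 1 → c (2 * n + 1) = 0) (n : ℕ) {ζ : ℂ} (hζ : ζ ^ N = 1) :
    psi c (2 * n + 1) (ζ * z) = ζ ^ (n + 1) * psi c (2 * n + 1) z := by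
  induction n generalizing ζ z with
  | zero => simp [psi_one (hceven 0)]
  | succ n ih =>
    rw [psi_two_mul_add_three (hceven _), psi_two_mul_add_three (hceven _), mul_inv, ih hζ,
      ih (by rw [inv_pow, hζ, inv_one])]
    by_cases hdvd : N ∣ n + 1
    · obtain ⟨m, hm⟩ := hdvd
      have hpow : ζ ^ (n + 1) = 1 := by rw [hm, pow_mul, hζ, one_pow]
      rw [inv_pow, pow_succ ζ (n + 1), hpow]
      ring
    · rw [hcodd n hdvd]
      push_cast
      ring

end Verblunsky

section Jacobi

lemma jacobiA_self_of_even (α : ℝ) {n : ℕ} (hn : Even n) : jacobiA α α n = 0 := by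
  simp [jacobiA, hn.add_one.neg_one_pow]

lemma jacobiA_self_of_odd (α : ℝ) {n : ℕ} (hn : Odd n) :
    jacobiA α α n = -(2 * α + 1) / (n + 2 * α + 2) := by
  rw [jacobiA, hn.add_one.neg_one_pow]
  ring

lemma sievedA_self_of_not_dvd (α : ℝ) {N n : ℕ} (h : ¬ 2 * N ∣ n + 1) : sievedA α α N n = 0 := by
  rw [sievedA]
  split_ifs with hdvd
  · obtain ⟨k, hk⟩ := hdvd
    have hN : 0 < N := Nat.pos_of_ne_zero (by rintro rfl; simp at hk)
    have hkodd : Odd k := by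
      rw [← Nat.not_even_iff_odd, even_iff_two_dvd]
      rintro ⟨l, rfl⟩
      exact h ⟨l, by rw [hk]; ring⟩
    rw [hk, Nat.mul_div_cancel_left _ hN]
    exact jacobiA_self_of_even α (hkodd.tsub_odd odd_one)
  · rfl

lemma sievedA_self_two_mul (α : ℝ) (N n : ℕ) : sievedA α α N (2 * n) = 0 :=
  sievedA_self_of_not_dvd α fun h => by
    have := (dvd_mul_right 2 N).trans h
    omega

lemma sievedA_self_two_mul_add_one_of_not_dvd (α : ℝ) {N n : ℕ} (h : ¬ N ∣ n + 1) :
    sievedA α α N (2 * n + 1) = 0 :=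
  sievedA_self_of_not_dvd α fun h' =>
    h (Nat.dvd_of_mul_dvd_mul_left two_pos h')

/- The excluded `α` are the zeros of the denominators of `jacobiA α α n` with `n` odd. -/
lemma sievedA_self_two_mul_add_one_of_dvd {α : ℝ} (hα : ∀ m : ℕ, α ≠ -(m + 3 / 2)) {N n : ℕ}
    (h : N ∣ n + 1) :
    sievedA α α N (2 * n + 1) * (2 * (n + 1) + N * (2 * α + 1)) = -(N * (2 * α + 1)) := by
  obtain ⟨k, hk⟩ := h
  have hN : 0 < N := Nat.pos_of_ne_zero (by rintro rfl; simp at hk)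
  obtain ⟨m, rfl⟩ : ∃ m, k = m + 1 := Nat.exists_eq_succ_of_ne_zero (by rintro rfl; simp at hk)
  have hden : 2 * (m : ℝ) + 2 * α + 3 ≠ 0 := fun h0 => hα m (by linarith)
  have hindex : 2 * n + 1 + 1 = N * (2 * m + 1 + 1) := by linarith
  have hcast : (n : ℝ) + 1 = N * (m + 1) := by exact_mod_cast hk
  rw [sievedA, hindex, if_pos (dvd_mul_right _ _), Nat.mul_div_cancel_left _ hN,
    Nat.add_sub_cancel, jacobiA_self_of_odd α (odd_two_mul_add_one m), hcast]
  push_cast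
  rw [div_mul_eq_mul_div, div_eq_iff (by convert hden using 1; ring)]
  ring

end Jacobi

lemma sievP_self_succ_eq_symmetrization (α : ℝ) (N n : ℕ) :
    sievP α α N (n + 1) = symmetrization (psi (sievedA α α N) (2 * n + 1)) := by
  funext z
  rw [sievP, mul_add_one, show 2 * n + 2 - 1 = 2 * n + 1 by omega, symmetrization]
  rcases eq_or_ne z 0 with rfl | hz
  · have hodd : psi (sievedA α α N) (2 * n + 1) 0 = 0 := by
      rw [psi_two_mul_add_one (sievedA_self_two_mul α N n), zero_mul]
    have heven : psi (sievedA α α N) (2 * n + 2) 0 = 0 := by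
      rw [psi, if_pos (by simp [parity_simps]), zero_pow (by omega), zero_mul]
    rw [inv_zero, hodd, heven, mul_zero]
  · rw [psi_two_mul_add_two _ n hz]
    ring

lemma isDunklEigen_psi_sievedA {α : ℝ} (hα : ∀ m : ℕ, α ≠ -(m + 3 / 2)) {N : ℕ} (hN : 0 < N)
    (n : ℕ) : IsDunklEigen N (n % N + 1) (N * (2 * (α : ℂ) + 1)) ((n + 1 : ℕ) : ℂ)
      (psi (sievedA α α N) (2 * n + 1)) := by
  induction n with
  | zero =>
    have hpsi : psi (sievedA α α N) (2 * 0 + 1) = fun z => z :=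
      funext fun _ => psi_one (sievedA_self_two_mul α N 0)
    simpa [hpsi] using isDunklEigen_id N ((N : ℂ) * (2 * α + 1))
  | succ n ih =>
    have hpsi : psi (sievedA α α N) (2 * (n + 1) + 1) = _ :=
      funext fun _ => psi_two_mul_add_three (sievedA_self_two_mul α N (n + 1))
    rw [hpsi, Nat.cast_succ (n + 1)]
    rcases (show n % N + 1 ≤ N from Nat.mod_lt n hN).lt_or_eq with hlt | heq
    · have hmod : (n + 1) % N = n % N + 1 := by rw [← Nat.mod_add_mod, Nat.mod_eq_of_lt hlt]
      have ha : sievedA α α N (2 * n + 1) = 0 :=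
        sievedA_self_two_mul_add_one_of_not_dvd α (by rw [Nat.dvd_iff_mod_eq_zero, hmod]; simp)
      simpa [hmod, ha] using ih.id_mul
    · have hmod : (n + 1) % N = 0 := by rw [← Nat.mod_add_mod, heq, Nat.mod_self]
      have ha := sievedA_self_two_mul_add_one_of_dvd hα (Nat.dvd_of_mod_eq_zero hmod)
      rw [hmod]
      rw [heq] at ih
      exact ih.id_mul_sub_reflection (by exact_mod_cast ha)

lemma psi_sievedA_mul_of_pow_eq_one (α : ℝ) {N : ℕ} (n : ℕ) {ζ : ℂ} (hζ : ζ ^ N = 1) (z : ℂ) :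
    psi (sievedA α α N) (2 * n + 1) (ζ * z) =
      ζ ^ (n % N + 1) * psi (sievedA α α N) (2 * n + 1) z := by
  rw [psi_mul_of_pow_eq_one (sievedA_self_two_mul α N)
    (fun _ => sievedA_self_two_mul_add_one_of_not_dvd α) n hζ, pow_succ, pow_succ,
    pow_eq_pow_mod n hζ]

theorem stmt_17_general (α : ℝ) (hα : ∀ m : ℕ, α ≠ -(m + 3 / 2)) (N n : ℕ)
    (hn : 1 ≤ n) (z : ℂ) (hz : z ≠ 0) (hz2 : z ^ (2 * N) ≠ 1) :
    z ^ 2 * deriv (deriv (sievP α α N n)) z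
      + z * (1 + (N : ℂ) * (2 * (α : ℂ) + 1)
          + 2 * (N : ℂ) * (2 * (α : ℂ) + 1) / (z ^ (2 * N) - 1)) * deriv (sievP α α N n) z
      + ∑ k ∈ Finset.range N,
          2 * (2 * (α : ℂ) + 1) * qN N ^ k * z ^ 2 / (qN N ^ k - z ^ 2) ^ 2
            * (sievP α α N n (qN N ^ k / z) - sievP α α N n z)
      = (n : ℂ) * ((n : ℂ) + (2 * (α : ℂ) + 1) * N) * sievP α α N n z := by
  have hN : 0 < N := Nat.pos_of_ne_zero (by rintro rfl; simp at hz2)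
  obtain ⟨n, rfl⟩ := Nat.exists_eq_add_of_le' hn
  rw [sievP_self_succ_eq_symmetrization]
  exact (isDunklEigen_psi_sievedA hα hN n).eigenvalue_equation_symmetrization
    (Complex.isPrimitiveRoot_exp N hN.ne') (Nat.mod_lt n hN)
    (fun _ x hζ => psi_sievedA_mul_of_pow_eq_one α n hζ x) hz hz2

/-- in the ultraspherical case α = β, the sieved ultraspherical polynomial
of the first kind 𝒫_n satisfies the explicit eigenvalue equation with eigenvalue
n(n + (2α+1)N). -/
theorem stmt_17 (α : ℝ) (hα : -1 < α) (N : ℕ) (hN : 1 ≤ N) (n : ℕ) (hn : 1 ≤ n)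
    (z : ℂ) (hz : z ≠ 0) (hz2 : z ^ (2 * N) ≠ 1) :
    z ^ 2 * deriv (deriv (sievP α α N n)) z
      + z * (1 + (N : ℂ) * (2 * (α : ℂ) + 1)
          + 2 * (N : ℂ) * (2 * (α : ℂ) + 1) / (z ^ (2 * N) - 1)) * deriv (sievP α α N n) z
      + ∑ k ∈ Finset.range N,
          2 * (2 * (α : ℂ) + 1) * qN N ^ k * z ^ 2 / (qN N ^ k - z ^ 2) ^ 2
            * (sievP α α N n (qN N ^ k / z) - sievP α α N n z)
      = (n : ℂ) * ((n : ℂ) + (2 * (α : ℂ) + 1) * N) * sievP α α N n z := by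
  exact stmt_17_general α (fun m h => by linarith [m.cast_nonneg (α := ℝ)]) N n hn z hz hz2
end
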